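/- Between any two consecutive type-1 events, the nominal trajectory's buffer becomes empty: if type-1 events occur at times t_{a,i} < t_{a,i+1}, then t_{a,i+1} > τ_{e,i}, where τ_{e,i} is the end-time of the busy period of x(k,·) containing t_{a,i}. -/

import Mathlib

/-! A single-server FCFS queue with deterministic service time `s`, buffer size `k`
(counting the job in service), driven by a finite list `as` of arrival times.
The state is the list of (arrival time, departure time) pairs of admitted jobs. -/

/-- Process one arrival `a`: it is admitted iff the number of jobs still in the
system just before `a` is less than `k`; its service starts when the server frees
(the departure time of the previously admitted job) or at `a`, and lasts `s`. -/
noncomputable def qstep (s : ℝ) (k : ℕ) (jobs : List (ℝ × ℝ)) (a : ℝ) :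
    List (ℝ × ℝ) :=
  if (jobs.filter (fun p => decide (a ≤ p.2))).length < k then
    jobs ++ [(a, max a (((jobs.getLast?).map Prod.snd).getD a) + s)]
  else jobs

/-- The admitted jobs (arrival, departure) after processing all arrivals. -/
noncomputable def qsim (s : ℝ) (k : ℕ) (as : List ℝ) : List (ℝ × ℝ) :=
  as.foldl (qstep s k) []

/-- The admitted jobs arrived strictly before time `t`. -/
noncomputable def jobsBefore (s : ℝ) (k : ℕ) (as : List ℝ) (t : ℝ) :
    List (ℝ × ℝ) :=
  ((as.filter (fun b => decide (b < t)))).foldl (qstep s k) []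

/-- `x(k,t)`: the number of jobs in the system at time `t` (right-continuous). -/
noncomputable def xq (s : ℝ) (k : ℕ) (as : List ℝ) (t : ℝ) : ℕ :=
  ((qsim s k as).filter (fun p => decide (p.1 ≤ t) && decide (t < p.2))).length

/-- `x(k,t⁻)`: the number of jobs in the system just before time `t`. -/
noncomputable def xqMinus (s : ℝ) (k : ℕ) (as : List ℝ) (t : ℝ) : ℕ :=
  ((qsim s k as).filter (fun p => decide (p.1 < t) && decide (t ≤ p.2))).length

/-- `n(k)`: the number of jobs lost during the horizon. -/
noncomputable def nLost (s : ℝ) (k : ℕ) (as : List ℝ) : ℕ :=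
  as.length - (qsim s k as).length

/-- A loss (of the trajectory with buffer size `k`) occurs at time `a`:
`a` is an arrival time and `x(k,a⁻) = k`. -/
noncomputable def isLoss (s : ℝ) (k : ℕ) (as : List ℝ) (a : ℝ) : Bool :=
  decide (a ∈ as) &&
    decide (((jobsBefore s k as a).filter (fun p => decide (a ≤ p.2))).length = k)

/-- The end time of the busy period of `x(k,·)` containing (or next following) `t`:
the first time `u ≥ t` at which the system is empty. -/
noncomputable def busyEnd (s : ℝ) (k : ℕ) (as : List ℝ) (t : ℝ) : ℝ :=
  sInf {u : ℝ | t ≤ u ∧ xq s k as u = 0}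

/-- One step of the state machine of Definition 1, acting on `(jobs, ψ, ζ)`.
At a type-2 event (arrival to an empty system), `ψ := 0` and
`ζ := min (t_b - τ_e + ζ) s`, with `τ_e` the end of the preceding busy period.
At a type-1 event (a loss with `ψ = 0` and `ζ > s - (t_a - t_0) ≥ 0`, where `t_0`
is the service-start time of the job in service), `ψ := 1` and `ζ := 0`. -/
noncomputable def pzstep (s : ℝ) (k : ℕ) (st : List (ℝ × ℝ) × Bool × ℝ) (a : ℝ) :
    List (ℝ × ℝ) × Bool × ℝ :=
  let present := st.1.filter (fun p => decide (a ≤ p.2))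
  if present.length = 0 then
    -- type-2 event
    (qstep s k st.1 a, false,
      min (a - (((st.1.getLast?).map Prod.snd).getD 0) + st.2.2) s)
  else if present.length < k then
    (qstep s k st.1 a, st.2.1, st.2.2)
  else
    -- a loss: possibly a type-1 event
    let t0 := ((present.head?).map (fun p => p.2 - s)).getD a
    if st.2.1 = false ∧ s - (a - t0) < st.2.2 ∧ 0 ≤ s - (a - t0) then
      (qstep s k st.1 a, true, 0)
    else
      (qstep s k st.1 a, st.2.1, st.2.2)

/-- The state `(jobs, ψ, ζ)` just before time `t` (initialized `ψ = 0`, `ζ = s`). -/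
noncomputable def pzBefore (s : ℝ) (k : ℕ) (as : List ℝ) (t : ℝ) :
    List (ℝ × ℝ) × Bool × ℝ :=
  ((as.filter (fun b => decide (b < t)))).foldl (pzstep s k) ([], false, s)

/-- `ζ(t)`: the value of the auxiliary variable `ζ` at time `t`. -/
noncomputable def zetaAt (s : ℝ) (k : ℕ) (as : List ℝ) (t : ℝ) : ℝ :=
  (((as.filter (fun b => decide (b ≤ t)))).foldl (pzstep s k) ([], false, s)).2.2

/-- A type-1 event occurs at time `a`: `a` is an arrival time, `x(k,a⁻) = k`,
`ψ = 0`, and `ζ > s - (a - t_0) ≥ 0` where `t_0` is the service-start time of the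
job in service at time `a`. -/
noncomputable def isType1 (s : ℝ) (k : ℕ) (as : List ℝ) (a : ℝ) : Bool :=
  let st := pzBefore s k as a
  let present := st.1.filter (fun p => decide (a ≤ p.2))
  let t0 := ((present.head?).map (fun p => p.2 - s)).getD a
  decide (a ∈ as) && decide (present.length = k) && (!st.2.1) &&
    decide (s - (a - t0) < st.2.2) && decide (0 ≤ s - (a - t0))

/-- A type-2 event occurs at time `a`: `a` is an arrival time and `x(k,a⁻) = 0`. -/
noncomputable def isType2 (s : ℝ) (k : ℕ) (as : List ℝ) (a : ℝ) : Bool :=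
  decide (a ∈ as) &&
    decide (((jobsBefore s k as a).filter (fun p => decide (a ≤ p.2))).length = 0)

/-- The departure time ending the busy period preceding `t` (i.e. the start of the
idle period preceding `t`); `0` if no job departed before `t`. -/
noncomputable def prevDep (s : ℝ) (k : ℕ) (as : List ℝ) (t : ℝ) : ℝ :=
  ((((jobsBefore s k as t)).getLast?).map Prod.snd).getD 0

/-- `b` is the start of a lossy busy period of `x(k,·)`: a type-2 event such that
some loss occurs during the busy period `[b, busyEnd b)` begun at `b`. -/
noncomputable def startsLossyBP (s : ℝ) (k : ℕ) (as : List ℝ) (b : ℝ) : Bool :=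
  isType2 s k as b &&
    as.any (fun a =>
      isLoss s k as a && decide (b ≤ a) && decide (a < busyEnd s k as b))

/-- `N₁`: the number of type-1 events. -/
noncomputable def numType1 (s : ℝ) (k : ℕ) (as : List ℝ) : ℕ :=
  (as.filter (isType1 s k as)).length

/-- `N`: the number of lossy busy periods. -/
noncomputable def numLossyBP (s : ℝ) (k : ℕ) (as : List ℝ) : ℕ :=
  (as.filter (startsLossyBP s k as)).length

/-- `N_s`: the number of lossy busy periods whose preceding idle period is shorter
than `s`. -/
noncomputable def numLossyBPShort (s : ℝ) (k : ℕ) (as : List ℝ) : ℕ :=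
  (as.filter (fun b =>
    startsLossyBP s k as b && decide (b - prevDep s k as b < s))).length

/-- `N_ℓ`: the number of lossy busy periods whose preceding idle period has length
at least `s`. -/
noncomputable def numLossyBPLong (s : ℝ) (k : ℕ) (as : List ℝ) : ℕ :=
  (as.filter (fun b =>
    startsLossyBP s k as b && decide (s ≤ b - prevDep s k as b))).length

/-! At a type-1 event `ψ` becomes `1`, while the next type-1 event requires `ψ = 0` just before it.
Only a type-2 event resets `ψ`, so some arrival strictly between the two finds the system empty.
The jobs admitted earlier are finitely many and have all departed strictly before that arrival, so
between the last of their departures and the arrival there is an instant with an empty system. -/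

section ListLemmas

variable {α β : Type*}

theorem exists_foldl_step_of_not {P : β → Prop} (f : β → α → β) {x : β} (l : List α)
    (hx : P x) (hl : ¬ P (l.foldl f x)) :
    ∃ l₁ a l₂, l = l₁ ++ a :: l₂ ∧ P (l₁.foldl f x) ∧ ¬ P (f (l₁.foldl f x) a) := by
  induction l generalizing x with
  | nil => exact absurd hx hl
  | cons a l ih =>
    by_cases ha : P (f x a)
    · obtain ⟨l₁, b, l₂, rfl, hb, hb'⟩ := ih ha hl
      exact ⟨a :: l₁, b, l₂, rfl, hb, hb'⟩
    · exact ⟨[], a, l, rfl, hx, ha⟩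

theorem filter_lt_append_filter_not_lt [LinearOrder α] {l : List α} (hl : l.SortedLE)
    (b : α) :
    l.filter (fun a => decide (a < b)) ++ l.filter (fun a => !decide (a < b)) = l := by
  refine (List.filter_append_perm _ l).eq_of_sortedLE ?_ hl
  rw [List.sortedLE_iff_pairwise] at hl ⊢
  refine List.pairwise_append.2 ⟨hl.filter _, hl.filter _, fun x hx y hy => ?_⟩
  simp only [List.mem_filter, decide_eq_true_eq, Bool.not_eq_true', decide_eq_false_iff_not,
    not_lt] at hx hy
  exact hx.2.le.trans hy.2

theorem filter_lt_eq_of_filter_lt_eq_append_cons [Preorder α] [DecidableLT α]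
    {l l₁ l₂ : List α} {b t : α} (hl : l.SortedLT)
    (h : l.filter (fun a => decide (a < t)) = l₁ ++ b :: l₂) :
    l.filter (fun a => decide (a < b)) = l₁ := by
  have hsorted : (l₁ ++ b :: l₂).Pairwise (· < ·) := h ▸ hl.pairwise.filter _
  have hbt : b < t := by
    have : b ∈ l.filter (fun a => decide (a < t)) := by simp [h]
    exact of_decide_eq_true (List.mem_filter.1 this).2
  obtain ⟨-, hright, hleft⟩ := List.pairwise_append.1 hsorted
  have hl₁ : l₁.filter (fun a => decide (a < b)) = l₁ :=
    List.filter_eq_self.2 fun a ha => decide_eq_true (hleft a ha b List.mem_cons_self)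
  have hl₂ : l₂.filter (fun a => decide (a < b)) = [] :=
    List.filter_eq_nil_iff.2 fun a ha => by
      simpa using (List.rel_of_pairwise_cons hright ha).not_gt
  calc l.filter (fun a => decide (a < b))
      = (l.filter (fun a => decide (a < t))).filter (fun a => decide (a < b)) := by
        rw [List.filter_filter]
        refine List.filter_congr fun a _ => ?_
        rw [← Bool.decide_and]
        exact decide_eq_decide.2 ⟨fun hab => ⟨hab, hab.trans hbt⟩, And.left⟩
    _ = l₁ := by simp [h, hl₁, hl₂]

theorem exists_between_forall_mem_le [LinearOrder α] {l : List α} {t b : α} (htb : t < b)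
    (hl : ∀ x ∈ l, x < b) : ∃ u, t ≤ u ∧ u < b ∧ ∀ x ∈ l, x ≤ u := by
  let s : Finset α := insert t l.toFinset
  have hs : s.Nonempty := Finset.insert_nonempty _ _
  refine ⟨s.max' hs, s.le_max' _ (by simp [s]), (s.max'_lt_iff hs).2 ?_,
    fun x hx => s.le_max' _ (by simp [s, hx])⟩
  simpa [s] using ⟨htb, hl⟩

end ListLemmas

section Queue

variable {s : ℝ} {k : ℕ} {as : List ℝ}

theorem mem_or_fst_eq_of_mem_qstep {jobs : List (ℝ × ℝ)} {a : ℝ} {p : ℝ × ℝ}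
    (hp : p ∈ qstep s k jobs a) : p ∈ jobs ∨ p.1 = a := by
  unfold qstep at hp
  split_ifs at hp
  · rcases List.mem_append.1 hp with hp | hp
    · exact .inl hp
    · exact .inr (congrArg Prod.fst (List.mem_singleton.1 hp))
  · exact .inl hp

theorem mem_or_fst_mem_of_mem_foldl_qstep {jobs : List (ℝ × ℝ)} {p : ℝ × ℝ}
    (hp : p ∈ as.foldl (qstep s k) jobs) : p ∈ jobs ∨ p.1 ∈ as := by
  induction as generalizing jobs with
  | nil => exact .inl hp
  | cons a as ih =>
    rcases ih hp with hp | hp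
    · exact (mem_or_fst_eq_of_mem_qstep hp).imp_right fun hpa => List.mem_cons.2 (.inl hpa)
    · exact .inr (List.mem_cons_of_mem a hp)

theorem mem_jobsBefore_of_mem_qsim (has : as.SortedLE) {p : ℝ × ℝ} {b : ℝ}
    (hp : p ∈ qsim s k as) (hpb : p.1 < b) : p ∈ jobsBefore s k as b := by
  rw [qsim, ← filter_lt_append_filter_not_lt has b, List.foldl_append] at hp
  refine (mem_or_fst_mem_of_mem_foldl_qstep hp).resolve_right fun hmem => ?_
  simpa [hpb] using (List.mem_filter.1 hmem).2

theorem isType2_iff {b : ℝ} :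
    isType2 s k as b = true ↔ b ∈ as ∧ ∀ p ∈ jobsBefore s k as b, p.2 < b := by
  simp only [isType2, Bool.and_eq_true, decide_eq_true_eq, List.length_eq_zero_iff,
    List.filter_eq_nil_iff, not_le]

theorem busyEnd_le_of_xq_eq_zero {t u : ℝ} (htu : t ≤ u) (hu : xq s k as u = 0) :
    busyEnd s k as t ≤ u :=
  csInf_le ⟨t, fun _ hv => hv.1⟩ ⟨htu, hu⟩

theorem xq_eq_zero_of_forall_jobsBefore_le (has : as.SortedLE) {b u : ℝ} (hub : u < b)
    (hu : ∀ p ∈ jobsBefore s k as b, p.2 ≤ u) : xq s k as u = 0 := by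
  simp only [xq, List.length_eq_zero_iff, List.filter_eq_nil_iff, Bool.and_eq_true,
    decide_eq_true_eq, not_and, not_lt]
  exact fun p hp hpu => hu p (mem_jobsBefore_of_mem_qsim has hp (hpu.trans_lt hub))

theorem busyEnd_lt_of_isType2 (has : as.SortedLE) {t b : ℝ} (hb : isType2 s k as b = true)
    (htb : t < b) : busyEnd s k as t < b := by
  obtain ⟨u, htu, hub, hu⟩ := exists_between_forall_mem_le
    (l := (jobsBefore s k as b).map Prod.snd) htb
    (List.forall_mem_map.2 (isType2_iff.1 hb).2)
  have hempty : xq s k as u = 0 :=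
    xq_eq_zero_of_forall_jobsBefore_le has hub (List.forall_mem_map.1 hu)
  exact (busyEnd_le_of_xq_eq_zero htu hempty).trans_lt hub

end Queue

section Flag

variable {s : ℝ} {k : ℕ} {as : List ℝ} {t t₁ t₂ : ℝ}

theorem fst_pzstep (st : List (ℝ × ℝ) × Bool × ℝ) (a : ℝ) :
    (pzstep s k st a).1 = qstep s k st.1 a := by
  simp only [pzstep]
  split_ifs <;> rfl

theorem fst_pzBefore : (pzBefore s k as t).1 = jobsBefore s k as t :=
  (List.foldl_hom Prod.fst fun st a => (fst_pzstep st a).symm).symm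

theorem forall_snd_lt_of_flag_pzstep_ne_true {st : List (ℝ × ℝ) × Bool × ℝ} {a : ℝ}
    (hst : st.2.1 = true) (h : (pzstep s k st a).2.1 ≠ true) : ∀ p ∈ st.1, p.2 < a := by
  contrapose! h
  obtain ⟨p, hp, hap⟩ := h
  have hpresent : (st.1.filter (fun p => decide (a ≤ p.2))).length ≠ 0 := fun h0 =>
    List.filter_eq_nil_iff.1 (List.length_eq_zero_iff.1 h0) p hp (decide_eq_true hap)
  simp only [pzstep, if_neg hpresent]
  split_ifs <;> first | rfl | exact hst

theorem exists_isType2_between_of_flag_reset (has : as.SortedLT) (ht₁ : t₁ ∈ as) (hlt : t₁ < t₂)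
    (hset : (pzstep s k (pzBefore s k as t₁) t₁).2.1 = true)
    (hreset : (pzBefore s k as t₂).2.1 = false) :
    ∃ b, isType2 s k as b = true ∧ t₁ < b ∧ b < t₂ := by
  obtain ⟨l, m, hsplit⟩ : ∃ l m, as.filter (fun a => decide (a < t₂)) = l ++ t₁ :: m :=
    List.append_of_mem (List.mem_filter.2 ⟨ht₁, decide_eq_true hlt⟩)
  rw [pzBefore, filter_lt_eq_of_filter_lt_eq_append_cons has hsplit] at hset
  rw [pzBefore, hsplit, List.foldl_append, List.foldl_cons] at hreset
  obtain ⟨m₁, b, m₂, rfl, hflag_before, hflag_after⟩ :=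
    exists_foldl_step_of_not (P := fun st => st.2.1 = true) (pzstep s k) m hset
      (Bool.eq_false_iff.1 hreset)
  have hb : b ∈ as ∧ b < t₂ := by
    have : b ∈ as.filter (fun a => decide (a < t₂)) := by simp [hsplit]
    simpa only [List.mem_filter, decide_eq_true_eq] using this
  have hbefore : as.filter (fun a => decide (a < b)) = l ++ t₁ :: m₁ :=
    filter_lt_eq_of_filter_lt_eq_append_cons has (l₂ := m₂)
      (by rw [hsplit, List.append_assoc, List.cons_append])
  have htb : t₁ < b := by
    have : t₁ ∈ as.filter (fun a => decide (a < b)) := by simp [hbefore]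
    exact of_decide_eq_true (List.mem_filter.1 this).2
  have hstate : pzBefore s k as b =
      m₁.foldl (pzstep s k) (pzstep s k (l.foldl (pzstep s k) ([], false, s)) t₁) := by
    rw [pzBefore, hbefore, List.foldl_append, List.foldl_cons]
  rw [← hstate] at hflag_before hflag_after
  refine ⟨b, isType2_iff.2 ⟨hb.1, ?_⟩, htb, hb.2⟩
  rw [← fst_pzBefore]
  exact forall_snd_lt_of_flag_pzstep_ne_true hflag_before hflag_after

theorem mem_of_isType1 (h : isType1 s k as t = true) : t ∈ as := by
  simp only [isType1, Bool.and_eq_true, decide_eq_true_eq] at h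
  exact h.1.1.1.1

theorem flag_pzBefore_of_isType1 (h : isType1 s k as t = true) :
    (pzBefore s k as t).2.1 = false := by
  simp only [isType1, Bool.and_eq_true, Bool.not_eq_true'] at h
  exact h.1.1.2

theorem flag_pzstep_pzBefore_of_isType1 (hk : 1 ≤ k) (h : isType1 s k as t = true) :
    (pzstep s k (pzBefore s k as t) t).2.1 = true := by
  simp only [isType1, Bool.and_eq_true, decide_eq_true_eq, Bool.not_eq_true'] at h
  obtain ⟨⟨⟨⟨-, hfull⟩, hψ⟩, hζ⟩, hresidual⟩ := h
  simp only [pzstep]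
  rw [if_neg (by omega), if_neg hfull.not_lt, if_pos ⟨hψ, hζ, hresidual⟩]

theorem exists_isType2_between_of_isType1 (hk : 1 ≤ k) (has : as.SortedLT)
    (h₁ : isType1 s k as t₁ = true) (h₂ : isType1 s k as t₂ = true) (hlt : t₁ < t₂) :
    ∃ b, isType2 s k as b = true ∧ t₁ < b ∧ b < t₂ :=
  exists_isType2_between_of_flag_reset has (mem_of_isType1 h₁) hlt
    (flag_pzstep_pzBefore_of_isType1 hk h₁) (flag_pzBefore_of_isType1 h₂)

end Flag

/-- between any two type-1 events the nominal buffer becomes empty: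
if type-1 events occur at `t₁ < t₂`, then `t₂` exceeds the end-time of the busy
period of `x(k,·)` containing `t₁`. -/
theorem type1_events_separated_by_idle (s tf : ℝ) (k : ℕ) (as : List ℝ)
    (hs : 0 < s) (hk : 1 ≤ k) (hinc : as.Chain' (· < ·))
    (hrange : ∀ a ∈ as, 0 < a ∧ a < tf)
    (t₁ t₂ : ℝ) (h1 : isType1 s k as t₁ = true) (h2 : isType1 s k as t₂ = true)
    (hlt : t₁ < t₂) :
    busyEnd s k as t₁ < t₂ := by
  have hsorted : as.SortedLT := List.sortedLT_iff_isChain.2 hinc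
  obtain ⟨b, hb, ht₁b, hbt₂⟩ := exists_isType2_between_of_isType1 hk hsorted h1 h2 hlt
  exact (busyEnd_lt_of_isType2 hsorted.sortedLE hb ht₁b).trans hbt₂
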